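/- arXiv:1103.0741 — 2 statements merged into one kernel-verified Lean document; each statement's English description precedes it below -/
import Mathlib

section
/- There is a constant c > 0 such that the following holds. Let p̂ satisfy c·(log n)/n ≤ p̂ ≤ 1 and let G be a random graph distributed as G_{n,p̂} (the stationary distribution of an edge-Markovian evolving graph with birth-rate p and death-rate q, where p̂ = p/(p+q)). Then with probability at least 1 − 1/n², G is simultaneously an (h, n·p̂/c)-expander for every h with 1 ≤ h ≤ 1/p̂, and an (h, n/(c·h))-expander for every h with 1/p̂ ≤ h ≤ n/2. -/
open Finset MeasureTheory

noncomputable section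

/-- Out-neighborhood `N_G(I)` of a set of nodes `I`. -/
def nbhd {n : ℕ} (G : SimpleGraph (Fin n)) (I : Finset (Fin n)) : Finset (Fin n) := by
  classical exact Finset.univ.filter (fun v => v ∉ I ∧ ∃ u ∈ I, G.Adj u v)

/-- The informed sets of the flooding process on the graph sequence `Gs` with source `s`. -/
def informed {n : ℕ} (Gs : ℕ → SimpleGraph (Fin n)) (s : Fin n) : ℕ → Finset (Fin n)
  | 0 => {s}
  | t + 1 => informed Gs s t ∪ nbhd (Gs t) (informed Gs s t)

/-- `G` is an `(h,k)`-expander: every nonempty set of at most `h` nodes has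
out-neighborhood of size at least `k` times its size. -/
def IsExpander {n : ℕ} (G : SimpleGraph (Fin n)) (h k : ℝ) : Prop :=
  ∀ I : Finset (Fin n), I.Nonempty → (I.card : ℝ) ≤ h →
    k * (I.card : ℝ) ≤ ((nbhd G I).card : ℝ)

/-- Euclidean distance in the plane. -/
def euclDist (x y : ℝ × ℝ) : ℝ := Real.sqrt ((x.1 - y.1) ^ 2 + (x.2 - y.2) ^ 2)

/-- The grid `L_{n,ε}` of points `(iε, jε)`, `i, j ∈ ℕ`, `i, j ≤ √n/ε`. -/
def grid (n : ℕ) (ε : ℝ) : Finset (ℝ × ℝ) :=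
  (Finset.range (⌊Real.sqrt n / ε⌋₊ + 1) ×ˢ Finset.range (⌊Real.sqrt n / ε⌋₊ + 1)).image
    (fun q => ((q.1 : ℝ) * ε, (q.2 : ℝ) * ε))

/-- `Γ(x)`: grid points within (move) radius `r` of `x`. -/
def gamma (n : ℕ) (ε r : ℝ) (x : ℝ × ℝ) : Finset (ℝ × ℝ) := by
  classical exact (grid n ε).filter (fun y => euclDist x y ≤ r)

/-- The stationary distribution `π(x) = |Γ(x)| / Σ_y |Γ(y)|` of node positions. -/
def statDist (n : ℕ) (ε r : ℝ) (x : ℝ × ℝ) : ℝ :=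
  if x ∈ grid n ε then
    ((gamma n ε r x).card : ℝ) / (∑ y ∈ grid n ε, ((gamma n ε r y).card : ℝ))
  else 0

/-- The `n` random positions `P` are independent, each distributed according to `π`. -/
def IsIIDStationary (n : ℕ) (ε r : ℝ) {Ω : Type} [MeasurableSpace Ω] (μ : Measure Ω)
    (P : Ω → Fin n → ℝ × ℝ) : Prop :=
  ∀ f : Fin n → ℝ × ℝ, μ {ω | P ω = f} = ENNReal.ofReal (∏ i, statDist n ε r (f i))

/-- Number of cells per side: `m = ⌈√(5n)/R⌉`. -/
def numCells (n : ℕ) (R : ℝ) : ℕ := ⌈Real.sqrt (5 * n) / R⌉₊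

/-- Side length of a cell. -/
def cellLen (n : ℕ) (R : ℝ) : ℝ := Real.sqrt n / (numCells n R : ℝ)

/-- Membership of a point `x` in cell `(i,j)` of the `m × m` partition of the square
`[0,√n]²` (cells are half-open, except that the last row/column is closed above,
points of the square being below `√n` anyway). -/
def inCell (n : ℕ) (R : ℝ) (i j : ℕ) (x : ℝ × ℝ) : Prop :=
  ((i : ℝ) * cellLen n R ≤ x.1 ∧ (x.1 < ((i : ℝ) + 1) * cellLen n R ∨ i + 1 = numCells n R)) ∧
  ((j : ℝ) * cellLen n R ≤ x.2 ∧ (x.2 < ((j : ℝ) + 1) * cellLen n R ∨ j + 1 = numCells n R))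

/-- The number of nodes whose positions (given by `p`) lie in cell `(i,j)`. -/
def cellCount (n : ℕ) (R : ℝ) (p : Fin n → ℝ × ℝ) (i j : ℕ) : ℕ := by
  classical exact (Finset.univ.filter fun v => inCell n R i j (p v)).card

/-- The geometric graph: an edge between distinct `u, v` iff their positions are at
Euclidean distance at most `R`. -/
def geoGraph (n : ℕ) (R : ℝ) (p : Fin n → ℝ × ℝ) : SimpleGraph (Fin n) :=
  SimpleGraph.fromRel (fun u v => euclDist (p u) (p v) ≤ R)

/-- `x` lies in the square `[0,√n]²`. -/
def inSquare (n : ℕ) (x : ℝ × ℝ) : Prop :=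
  0 ≤ x.1 ∧ x.1 ≤ Real.sqrt n ∧ 0 ≤ x.2 ∧ x.2 ≤ Real.sqrt n

/-- The random graph `G` is distributed as the Erdős–Rényi graph `G_{n,p}`. -/
def IsErdosRenyi {n : ℕ} {Ω : Type} [MeasurableSpace Ω] (μ : Measure Ω)
    (G : Ω → SimpleGraph (Fin n)) (p : ℝ) : Prop :=
  ∀ H : SimpleGraph (Fin n),
    μ {ω | G ω = H} =
      ENNReal.ofReal (p ^ (Nat.card H.edgeSet) * (1 - p) ^ (n.choose 2 - Nat.card H.edgeSet))


/-!
Given a set `S` of nodes, the random graph `G_{n,p}` has no edge between `S` and a disjoint set `J`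
with probability `((1 - p) ^ |S|) ^ |J|`. These probabilities determine the generating function of
`|N(S)|`, which is that of a binomial variable. Writing `x = p |S|`, the Chernoff bound with
parameter `-max 1 x` shows that `|N(S)| ≤ n * min x 1 / c` has probability at most
`exp (-(1 / 8 - 1 / c) * n * x)`, because `max 1 x * min x 1 = x`. For `x > 1` the constant
parameter `-1` would only give `exp (-Ω(n))`, which does not beat the number of sets `S`. The bounds
are geometric in `|S|`, so a single union bound over all nonempty `S` covers both regimes.
-/

section Analytic

open Real

-- The slope `1 / 4` comes from `(1 - e⁻¹)² ≥ 1 / 4`.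
theorem exp_neg_max_one_mix_le {x : ℝ} (hx : 0 ≤ x) :
    (1 - exp (-max 1 x)) * exp (-x) + exp (-max 1 x) ≤ exp (-(x / 4)) := by
  have hinv : exp (-1) ≤ 1 / 2 := by linarith [exp_neg_one_lt_d9]
  rcases le_total x 1 with h | h
  · rw [max_eq_left h]
    have hchord : exp (-x) ≤ 1 - (1 - exp (-1)) * x := by
      have := convexOn_exp.2 (Set.mem_univ 0) (Set.mem_univ (-1)) (sub_nonneg.mpr h) hx (by ring)
      simp only [smul_eq_mul, mul_zero, zero_add, exp_zero, mul_one, mul_neg] at this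
      linarith
    calc (1 - exp (-1)) * exp (-x) + exp (-1)
        ≤ (1 - exp (-1)) * (1 - (1 - exp (-1)) * x) + exp (-1) := by gcongr; linarith
      _ = 1 - (1 - exp (-1)) ^ 2 * x := by ring
      _ ≤ 1 - (1 / 2) ^ 2 * x := by gcongr; linarith
      _ ≤ exp (-(x / 4)) := by linarith [add_one_le_exp (-(x / 4))]
  · rw [max_eq_right h]
    have htwo : 2 ≤ exp (3 / 4 * x) := by
      nlinarith [quadratic_le_exp_of_nonneg (x := 3 / 4 * x) (by linarith)]
    calc (1 - exp (-x)) * exp (-x) + exp (-x)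
        ≤ 2 * exp (-x) := by nlinarith [exp_pos (-x)]
      _ ≤ exp (3 / 4 * x) * exp (-x) := by gcongr
      _ = exp (-(x / 4)) := by rw [← exp_add]; ring_nf

theorem sum_erase_empty_pow_card_le {ι : Type*} [Fintype ι] [DecidableEq ι] {t : ℝ} (ht : 0 ≤ t)
    (hcard : Fintype.card ι * t ≤ 1) :
    ∑ S ∈ (Finset.univ : Finset (Finset ι)).erase ∅, t ^ #S ≤ 2 * (Fintype.card ι * t) := by
  have hnonneg : 0 ≤ Fintype.card ι * t := by positivity
  have hsum : ∑ S : Finset ι, t ^ #S = (t + 1) ^ Fintype.card ι := by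
    simpa using Fintype.sum_pow_mul_eq_add_pow ι t 1
  calc ∑ S ∈ (Finset.univ : Finset (Finset ι)).erase ∅, t ^ #S
      = (t + 1) ^ Fintype.card ι - 1 := by
        rw [← hsum, Finset.sum_erase_eq_sub (Finset.mem_univ _), Finset.card_empty, pow_zero]
    _ ≤ exp (Fintype.card ι * t) - 1 := by
        rw [exp_nat_mul]
        gcongr
        exact add_one_le_exp t
    _ ≤ 2 * (Fintype.card ι * t) := by
        simpa [abs_of_nonneg hnonneg] using
          (le_abs_self _).trans (abs_exp_sub_one_le ((abs_of_nonneg hnonneg).trans_le hcard))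

theorem two_mul_mul_exp_le_one_div_sq {n : ℕ} (hn : 2 ≤ n) {x : ℝ} (hx : 4 * log n ≤ x) :
    2 * (n * exp (-x)) ≤ 1 / (n : ℝ) ^ 2 := by
  have hn' : (2 : ℝ) ≤ n := by exact_mod_cast hn
  have hn0 : (0 : ℝ) < n := by positivity
  have hexp : exp (-x) ≤ 1 / (n : ℝ) ^ 4 := by
    calc exp (-x) ≤ exp (-(4 * log n)) := by gcongr
      _ = 1 / (n : ℝ) ^ 4 := by
          rw [exp_neg, mul_comm, exp_mul, exp_log hn0, one_div]
          norm_cast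
  calc 2 * (n * exp (-x)) ≤ n * (n * (1 / (n : ℝ) ^ 4)) := by gcongr
    _ = 1 / (n : ℝ) ^ 2 := by field_simp

end Analytic

section BernoulliSets

open ProbabilityTheory Measure

theorem setBernoulli_real_disjoint {ι : Type*} {u : Set ι} {F : Finset ι} (hF : ↑F ⊆ u)
    (p : unitInterval) : setBer(u, p).real {s | Disjoint ↑F s} = (1 - p : ℝ) ^ #F := by
  have hpre : (fun P : ι → Prop ↦ {i | P i}) ⁻¹' {s | Disjoint ↑F s} =
      Set.pi (F : Set ι) fun _ ↦ {False} := by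
    ext P
    simp [Set.disjoint_left, Set.mem_pi]
  rw [measureReal_def, setBernoulli_apply', hpre, infinitePi_pi _ fun _ _ ↦ .singleton _,
    Finset.prod_congr rfl (g := fun _ ↦ (unitInterval.toNNReal (unitInterval.symm p) : ENNReal))]
  · simp
  · intro i hi
    simp [hF hi]

theorem sum_powerset_filter_disjoint {ι R : Type*} [DecidableEq ι] [CommRing R]
    {s X : Finset ι} (hX : X ⊆ s) (a : R) :
    ∑ J ∈ s.powerset with Disjoint J X, (1 - a) ^ #J * a ^ (#s - #J) = a ^ #X := by
  have hfilter : {J ∈ s.powerset | Disjoint J X} = (s \ X).powerset := by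
    ext J
    simp [Finset.subset_sdiff]
  have hcard : #(s \ X) + #X = #s := Finset.card_sdiff_add_card_eq_card hX
  calc ∑ J ∈ s.powerset with Disjoint J X, (1 - a) ^ #J * a ^ (#s - #J)
      = (∑ J ∈ (s \ X).powerset, (1 - a) ^ #J * a ^ (#(s \ X) - #J)) * a ^ #X := by
        rw [hfilter, Finset.sum_mul]
        refine Finset.sum_congr rfl fun J hJ ↦ ?_
        have hJ' : #J ≤ #(s \ X) := Finset.card_le_card (Finset.mem_powerset.mp hJ)
        rw [mul_assoc, ← pow_add]
        congr 2
        omega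
    _ = a ^ #X := by rw [Finset.sum_pow_mul_eq_add_pow, sub_add_cancel, one_pow, one_mul]

theorem integral_pow_card_of_real_disjoint {Ω ι : Type*} [MeasurableSpace Ω]
    {μ : Measure Ω} [IsFiniteMeasure μ] {X : Ω → Finset ι} {s : Finset ι} {r : ℝ}
    (hX : ∀ ω, X ω ⊆ s) (hmeas : ∀ J ⊆ s, MeasurableSet {ω | Disjoint J (X ω)})
    (hr : ∀ J ⊆ s, μ.real {ω | Disjoint J (X ω)} = r ^ #J) (a : ℝ) :
    ∫ ω, a ^ #(X ω) ∂μ = ((1 - a) * r + a) ^ #s := by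
  classical
  calc ∫ ω, a ^ #(X ω) ∂μ
      = ∫ ω, ∑ J ∈ s.powerset, {ω | Disjoint J (X ω)}.indicator
          (fun _ ↦ (1 - a) ^ #J * a ^ (#s - #J)) ω ∂μ := by
        simp_rw [← sum_powerset_filter_disjoint (hX _) a, Finset.sum_filter, Set.indicator_apply,
          Set.mem_ofPred_eq]
    _ = ∑ J ∈ s.powerset, ((1 - a) * r) ^ #J * a ^ (#s - #J) := by
        rw [integral_finsetSum _ fun J hJ ↦
          (integrable_const _).indicator (hmeas J (Finset.mem_powerset.mp hJ))]
        refine Finset.sum_congr rfl fun J hJ ↦ ?_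
        rw [Finset.mem_powerset] at hJ
        rw [integral_indicator_const _ (hmeas J hJ), hr J hJ, smul_eq_mul, mul_pow]
        ring
    _ = ((1 - a) * r + a) ^ #s := Finset.sum_pow_mul_eq_add_pow _ _ _

end BernoulliSets

section BinomialRandomGraph

open ProbabilityTheory SimpleGraph

instance {V : Type*} [Countable V] : MeasurableSingletonClass (SimpleGraph V) where
  measurableSet_singleton H := by
    rw [← measurableEmbedding_edgeSet.measurableSet_image, Set.image_singleton]
    exact .singleton _

theorem binomialRandom_real_disjoint_edgeSet {V : Type*} [Countable V] (p : unitInterval)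
    {F : Finset (Sym2 V)} (hF : ∀ e ∈ F, ¬ e.IsDiag) :
    G(V, p).real {H | Disjoint ↑F H.edgeSet} = (1 - p : ℝ) ^ #F := by
  have hF' : (F : Set (Sym2 V)) ⊆ Sym2.diagSetᶜ := fun e he ↦ by simpa using hF e he
  have himage : edgeSet '' {H : SimpleGraph V | Disjoint ↑F H.edgeSet} =
      {s ∈ {s : Set (Sym2 V) | Disjoint ↑F s} | s ⊆ Sym2.diagSetᶜ} := by
    ext s
    constructor
    · rintro ⟨H, hH, rfl⟩
      exact ⟨hH, H.edgeSet_subset_compl_diagSet⟩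
    · rintro ⟨hs, hdiag⟩
      have hedge : (fromEdgeSet s).edgeSet = s :=
        (edgeSet_eq_iff _ _).mpr ⟨rfl, Set.subset_compl_iff_disjoint_right.mp hdiag⟩
      exact ⟨fromEdgeSet s, by rwa [Set.mem_ofPred_eq, hedge], hedge⟩
  rw [← setBernoulli_real_disjoint hF', measureReal_def, measureReal_def, binomialRandom_apply',
    himage, ← setBernoulli_apply_eq_apply_subsets]

variable {n : ℕ}

theorem mem_nbhd {H : SimpleGraph (Fin n)} {S : Finset (Fin n)} {v : Fin n} :
    v ∈ nbhd H S ↔ v ∉ S ∧ ∃ u ∈ S, H.Adj u v := by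
  simp [nbhd]

theorem nbhd_subset_compl (H : SimpleGraph (Fin n)) (S : Finset (Fin n)) : nbhd H S ⊆ Sᶜ :=
  fun _ hv ↦ Finset.mem_compl.mpr (mem_nbhd.mp hv).1

theorem disjoint_nbhd_iff_disjoint_edgeSet {H : SimpleGraph (Fin n)} {S J : Finset (Fin n)}
    (hJ : J ⊆ Sᶜ) :
    Disjoint J (nbhd H S) ↔ Disjoint ↑(Finset.image₂ Sym2.mk S J) H.edgeSet := by
  simp only [Finset.disjoint_left, Set.disjoint_left, Finset.mem_coe, Finset.forall_mem_image₂,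
    mem_nbhd, mem_edgeSet]
  have hJS : ∀ v ∈ J, v ∉ S := fun v hv ↦ Finset.mem_compl.mp (hJ hv)
  grind

theorem card_image₂_sym2Mk {V : Type*} [DecidableEq V] {S T : Finset V} (hST : Disjoint S T) :
    #(Finset.image₂ Sym2.mk S T) = #S * #T := by
  rw [Finset.card_image₂_iff]
  rintro ⟨u, v⟩ huv ⟨u', v'⟩ huv' h
  simp only [Set.mem_prod, Finset.mem_coe] at huv huv'
  have := Finset.disjoint_left.mp hST
  grind

theorem binomialRandom_real_disjoint_nbhd (p : unitInterval) {S J : Finset (Fin n)}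
    (hJ : J ⊆ Sᶜ) :
    G(Fin n, p).real {H | Disjoint J (nbhd H S)} = ((1 - p : ℝ) ^ #S) ^ #J := by
  have hSJ : Disjoint S J := Finset.subset_compl_iff_disjoint_left.mp hJ
  have hdiag : ∀ e ∈ Finset.image₂ Sym2.mk S J, ¬ e.IsDiag := by
    simp only [Finset.forall_mem_image₂, Sym2.mk_isDiag_iff]
    exact fun u hu v hv ↦ Finset.disjoint_iff_ne.mp hSJ u hu v hv
  simp_rw [disjoint_nbhd_iff_disjoint_edgeSet hJ]
  rw [binomialRandom_real_disjoint_edgeSet p hdiag, card_image₂_sym2Mk hSJ, pow_mul]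

theorem mgf_card_nbhd_binomialRandom (p : unitInterval) (S : Finset (Fin n)) (t : ℝ) :
    mgf (fun H ↦ (#(nbhd H S) : ℝ)) G(Fin n, p) t =
      ((1 - Real.exp t) * (1 - p : ℝ) ^ #S + Real.exp t) ^ (n - #S) := by
  have hpgf := integral_pow_card_of_real_disjoint (μ := G(Fin n, p)) (nbhd_subset_compl · S)
    (fun _ _ ↦ .of_discrete) (fun _ hJ ↦ binomialRandom_real_disjoint_nbhd p hJ) (Real.exp t)
  rw [Finset.card_compl, Fintype.card_fin] at hpgf
  simp_rw [mgf, ← hpgf, ← Real.exp_nat_mul, mul_comm]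

theorem mgf_card_nbhd_binomialRandom_le (p : unitInterval) {S : Finset (Fin n)}
    (hS : (#S : ℝ) ≤ n / 2) :
    mgf (fun H ↦ (#(nbhd H S) : ℝ)) G(Fin n, p) (-max 1 (p * #S : ℝ)) ≤
      Real.exp (-(n * (p * #S) / 8)) := by
  set x : ℝ := p * #S with hx
  have hp : 0 ≤ (p : ℝ) := p.2.1
  have hx0 : 0 ≤ x := by positivity
  have hexp : Real.exp (-max 1 x) ≤ 1 :=
    Real.exp_le_one_iff.mpr (by linarith [le_max_left 1 x])
  have hσ : 0 ≤ 1 - (p : ℝ) := unitInterval.one_minus_nonneg p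
  have hmiss : (1 - p : ℝ) ^ #S ≤ Real.exp (-x) := by
    calc (1 - p : ℝ) ^ #S ≤ Real.exp (-p) ^ #S := by gcongr; exact Real.one_sub_le_exp_neg p
      _ = Real.exp (-x) := by rw [← Real.exp_nat_mul, hx]; ring_nf
  have hcast : ((n - #S : ℕ) : ℝ) = n - #S := Nat.cast_sub (by simpa using Finset.card_le_univ S)
  calc mgf (fun H ↦ (#(nbhd H S) : ℝ)) G(Fin n, p) (-max 1 x)
      = ((1 - Real.exp (-max 1 x)) * (1 - p : ℝ) ^ #S + Real.exp (-max 1 x)) ^ (n - #S) :=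
        mgf_card_nbhd_binomialRandom p S _
    _ ≤ ((1 - Real.exp (-max 1 x)) * Real.exp (-x) + Real.exp (-max 1 x)) ^ (n - #S) := by
        have := sub_nonneg.mpr hexp
        gcongr
    _ ≤ Real.exp (-(x / 4)) ^ (n - #S) := by
        have := sub_nonneg.mpr hexp
        gcongr
        exact exp_neg_max_one_mix_le hx0
    _ = Real.exp (-((n - #S) * x / 4)) := by rw [← Real.exp_nat_mul, hcast]; ring_nf
    _ ≤ Real.exp (-(n * x / 8)) := by
        rw [Real.exp_le_exp]
        nlinarith

theorem binomialRandom_real_card_nbhd_le (p : unitInterval) (c : ℝ) {S : Finset (Fin n)}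
    (hS : (#S : ℝ) ≤ n / 2) :
    G(Fin n, p).real {H | (#(nbhd H S) : ℝ) ≤ n * min (p * #S : ℝ) 1 / c} ≤
      Real.exp (-((1 / 8 - 1 / c) * (n * p))) ^ #S := by
  set x : ℝ := p * #S with hx
  have hmaxmin : max 1 x * min x 1 = x := by rw [min_comm, max_mul_min, one_mul]
  calc G(Fin n, p).real {H | (#(nbhd H S) : ℝ) ≤ n * min x 1 / c}
      ≤ Real.exp (-(-max 1 x) * (n * min x 1 / c)) *
          mgf (fun H ↦ (#(nbhd H S) : ℝ)) G(Fin n, p) (-max 1 x) :=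
        measure_le_le_exp_mul_mgf _ (by linarith [le_max_left 1 x]) .of_finite
    _ ≤ Real.exp (n * (max 1 x * min x 1) / c) * Real.exp (-(n * x / 8)) := by
        rw [neg_neg]
        refine mul_le_mul (le_of_eq ?_) (mgf_card_nbhd_binomialRandom_le p hS) mgf_nonneg
          (Real.exp_nonneg _)
        ring_nf
    _ = Real.exp (-((1 / 8 - 1 / c) * (n * p))) ^ #S := by
        rw [hmaxmin, ← Real.exp_add, ← Real.exp_nat_mul, hx]
        ring_nf

end BinomialRandomGraph

section Expansion

open ProbabilityTheory SimpleGraph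

variable {n : ℕ}

/-- Both expansion regimes of `G_{n,p}` in one condition: every nonempty set of at most half the
nodes has at least `n p |S| / c` neighbors while `p |S| ≤ 1`, and at least `n / c` beyond that.
Larger `c` means weaker expansion. -/
def HasTruncatedExpansion (G : SimpleGraph (Fin n)) (p c : ℝ) : Prop :=
  ∀ S : Finset (Fin n), S.Nonempty → (#S : ℝ) ≤ n / 2 → n * min (p * #S) 1 / c ≤ #(nbhd G S)

theorem HasTruncatedExpansion.isExpander_of_le_one_div {G : SimpleGraph (Fin n)} {p c h : ℝ}
    (hG : HasTruncatedExpansion G p c) (hp : 0 < p) (hnp : 2 ≤ n * p) (hh : h ≤ 1 / p) :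
    IsExpander G h (n * p / c) := by
  intro S hS hSh
  have hSp : #S ≤ 1 / p := hSh.trans hh
  have hSn : (#S : ℝ) ≤ n / 2 := by
    refine hSp.trans ?_
    rw [div_le_div_iff₀ hp two_pos]
    linarith
  have hmin : min (p * #S) 1 = p * #S := min_eq_left ((le_div_iff₀' hp).mp hSp)
  calc n * p / c * #S = n * min (p * #S) 1 / c := by rw [hmin]; ring
    _ ≤ #(nbhd G S) := hG S hS hSn

theorem HasTruncatedExpansion.isExpander_of_one_div_le {G : SimpleGraph (Fin n)} {p c h : ℝ}
    (hG : HasTruncatedExpansion G p c) (hc : 0 ≤ c) (hp : 0 < p) (hph : 1 / p ≤ h)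
    (hh : h ≤ n / 2) : IsExpander G h (n / (c * h)) := by
  intro S hS hSh
  have hh0 : 0 < h := (one_div_pos.mpr hp).trans_le hph
  have hmin : #S / h ≤ min (p * #S) 1 := by
    refine le_min ?_ ((div_le_one hh0).mpr hSh)
    calc #S / h ≤ #S / (1 / p) := by gcongr
      _ = p * #S := by field_simp
  calc n / (c * h) * #S = n * (#S / h) / c := by field_simp
    _ ≤ n * min (p * #S) 1 / c := by gcongr
    _ ≤ #(nbhd G S) := hG S hS (hSh.trans hh)

theorem binomialRandom_real_not_hasTruncatedExpansion_le (p : unitInterval) (c : ℝ) :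
    G(Fin n, p).real {H | ¬ HasTruncatedExpansion H p c} ≤
      2 * (n * Real.exp (-((1 / 8 - 1 / c) * (n * p)))) := by
  classical
  set t : ℝ := Real.exp (-((1 / 8 - 1 / c) * (n * p)))
  have ht : 0 ≤ t := Real.exp_nonneg _
  rcases lt_or_ge 1 (n * t) with hlarge | hsmall
  · linarith [measureReal_le_one (μ := G(Fin n, p)) (s := {H | ¬ HasTruncatedExpansion H p c})]
  let bad (S : Finset (Fin n)) : Set (SimpleGraph (Fin n)) :=
    {H | (#(nbhd H S) : ℝ) ≤ n * min (p * #S : ℝ) 1 / c}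
  let small : Finset (Finset (Fin n)) := {S ∈ Finset.univ.erase ∅ | (#S : ℝ) ≤ n / 2}
  have hcover : {H | ¬ HasTruncatedExpansion H p c} ⊆ ⋃ S ∈ small, bad S := by
    intro H hH
    simp only [HasTruncatedExpansion, Set.mem_ofPred_eq, not_forall, not_le] at hH
    obtain ⟨S, hS, hSn, hlt⟩ := hH
    exact Set.mem_biUnion (x := S) (by simp [small, hS.ne_empty, hSn]) hlt.le
  calc G(Fin n, p).real {H | ¬ HasTruncatedExpansion H p c}
      ≤ G(Fin n, p).real (⋃ S ∈ small, bad S) := measureReal_mono hcover (measure_ne_top _ _)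
    _ ≤ ∑ S ∈ small, G(Fin n, p).real (bad S) := measureReal_biUnion_finset_le _ _
    _ ≤ ∑ S ∈ small, t ^ #S := Finset.sum_le_sum fun S hS ↦
        binomialRandom_real_card_nbhd_le p c (Finset.mem_filter.mp hS).2
    _ ≤ ∑ S ∈ (Finset.univ : Finset (Finset (Fin n))).erase ∅, t ^ #S :=
        Finset.sum_le_sum_of_subset_of_nonneg (Finset.filter_subset _ _) fun _ _ _ ↦ by positivity
    _ ≤ 2 * (n * t) := by
        simpa using sum_erase_empty_pow_card_le (ι := Fin n) ht (by simpa using hsmall)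

end Expansion

section ErdosRenyi

open ProbabilityTheory SimpleGraph

variable {n : ℕ} {Ω : Type} [MeasurableSpace Ω] {μ : Measure Ω} {G : Ω → SimpleGraph (Fin n)}
  {p : unitInterval}

theorem IsErdosRenyi.measure_eq_binomialRandom_singleton (hG : IsErdosRenyi μ G p)
    (H : SimpleGraph (Fin n)) : μ {ω | G ω = H} = G(Fin n, p) {H} := by
  have hp : 0 ≤ (p : ℝ) := p.2.1
  have hσ : 0 ≤ 1 - (p : ℝ) := unitInterval.one_minus_nonneg p
  have hp' : ENNReal.ofReal p = unitInterval.toNNReal p := ENNReal.ofReal_eq_coe_nnreal hp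
  have hσ' : ENNReal.ofReal (1 - p) = unitInterval.toNNReal (unitInterval.symm p) :=
    ENNReal.ofReal_eq_coe_nnreal hσ
  rw [hG H, binomialRandom_singleton, ENNReal.ofReal_mul (by positivity), ENNReal.ofReal_pow hp,
    ENNReal.ofReal_pow hσ, hp', hσ', Nat.card_fin]
  rfl

-- `G` need not be measurable, so `μ` is only known to be subadditive on preimages under `G`.
theorem IsErdosRenyi.measure_preimage_le (hG : IsErdosRenyi μ G p)
    (A : Set (SimpleGraph (Fin n))) :
    μ (G ⁻¹' A) ≤ G(Fin n, p) A := by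
  classical
  calc μ (G ⁻¹' A) = μ (⋃ H ∈ A.toFinset, {ω | G ω = H}) := by
        congr 1
        ext ω
        simp
    _ ≤ ∑ H ∈ A.toFinset, μ {ω | G ω = H} := measure_biUnion_finset_le _ _
    _ = G(Fin n, p) A := by
        simp_rw [hG.measure_eq_binomialRandom_singleton, sum_measure_singleton, Set.coe_toFinset]

theorem IsErdosRenyi.measure_preimage [IsProbabilityMeasure μ] (hG : IsErdosRenyi μ G p)
    (A : Set (SimpleGraph (Fin n))) :
    μ (G ⁻¹' A) = G(Fin n, p) A := by
  refine le_antisymm (hG.measure_preimage_le A) ?_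
  calc G(Fin n, p) A = 1 - G(Fin n, p) Aᶜ :=
        ENNReal.eq_sub_of_add_eq (measure_ne_top _ _) (prob_add_prob_compl .of_discrete)
    _ ≤ 1 - μ (G ⁻¹' Aᶜ) := tsub_le_tsub_left (hG.measure_preimage_le Aᶜ) 1
    _ ≤ μ (G ⁻¹' A) := by
        rw [tsub_le_iff_right, ← measure_univ (μ := μ), Set.preimage_compl]
        exact measure_univ_le_add_compl _

theorem IsErdosRenyi.ofReal_one_sub_le_measure [IsProbabilityMeasure μ]
    (hG : IsErdosRenyi μ G p) (A : Set (SimpleGraph (Fin n))) {ε : ℝ}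
    (hA : G(Fin n, p).real Aᶜ ≤ ε) :
    ENNReal.ofReal (1 - ε) ≤ μ (G ⁻¹' A) := by
  rw [hG.measure_preimage, ← ofReal_measureReal]
  gcongr
  rw [probReal_compl_eq_one_sub .of_discrete] at hA
  linarith

end ErdosRenyi

/-- expander properties of the stationary distribution `G_{n,p̂}` of
an edge-Markovian evolving graph. -/
theorem er_expander :
    ∃ c : ℝ, 0 < c ∧
      ∀ (n : ℕ) (phat : ℝ) (Ω : Type) [MeasurableSpace Ω] (μ : Measure Ω)
        [IsProbabilityMeasure μ] (G : Ω → SimpleGraph (Fin n)),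
        2 ≤ n → c * Real.log n / n ≤ phat → phat ≤ 1 →
        IsErdosRenyi μ G phat →
        ENNReal.ofReal (1 - 1 / (n : ℝ) ^ 2) ≤
          μ {ω |
            (∀ h : ℝ, 1 ≤ h → h ≤ 1 / phat →
              IsExpander (G ω) h ((n : ℝ) * phat / c)) ∧
            (∀ h : ℝ, 1 / phat ≤ h → h ≤ (n : ℝ) / 2 →
              IsExpander (G ω) h ((n : ℝ) / (c * h)))} := by
  refine ⟨40, by norm_num, fun n phat Ω _ μ _ G hn hp hp1 hG ↦ ?_⟩
  have hn0 : (0 : ℝ) < n := by positivity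
  have hnp : 40 * Real.log n ≤ n * phat := (div_le_iff₀' hn0).mp hp
  have hlog : Real.log 2 ≤ Real.log n := Real.log_le_log two_pos (by exact_mod_cast hn)
  have hnp2 : 2 ≤ n * phat := by linarith [Real.log_two_gt_d9]
  have hp0 : 0 < phat := pos_of_mul_pos_right (two_pos.trans_le hnp2) hn0.le
  lift phat to unitInterval using ⟨hp0.le, hp1⟩
  refine (hG.ofReal_one_sub_le_measure {H | HasTruncatedExpansion H phat 40} <|
    (binomialRandom_real_not_hasTruncatedExpansion_le phat 40).trans <|
      two_mul_mul_exp_le_one_div_sq hn (by linarith)).trans (measure_mono fun ω hω ↦ ?_)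
  exact ⟨fun h _ hh ↦ hω.isExpander_of_le_one_div hp0 hnp2 hh,
    fun h hph hh ↦ hω.isExpander_of_one_div_le (by norm_num) hp0 hph hh⟩

end
end

section
/- There exist constants c, c₁, c₂ > 0 such that the following holds. Let p̂ satisfy c·(log n)/n ≤ p̂ ≤ n^{1/log log n}/n, and let (G_t)_{t∈ℕ} be a sequence of random graphs on [n] such that every G_t is distributed as G_{n,p̂} (as holds for a stationary edge-Markovian evolving graph). Then with probability at least 1 − 2/n the flooding time T of (G_t) satisfies c₁ · log n / log(n·p̂) ≤ T ≤ c₂ · log n / log(n·p̂). -/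
open Finset MeasureTheory

noncomputable section

/-!
Call a snapshot of average degree about `d = n p` regular if sets of at most `n / d` nodes expand by
a factor `d / 20`, any two disjoint sets of at least `n / 40` nodes are joined by an edge, and all
degrees are at most `8 d`. For `d ≥ c log n` a snapshot fails to be regular with probability
`O(n⁻⁵)`: the neighborhood of `A` equals `S` with probability at most
`(|A| p) ^ |S| (1 - p) ^ (|A| (n - |A| - |S|))`, and tilting this bound exponentially gives Chernoff
tails that survive the union bounds over nodes and sets. A further union bound over the first
`O(log n / log d)` times makes all relevant snapshots regular; no independence in time is involved.

For regular snapshots, expansion alone is too weak to finish the flooding, as it says nothing about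
the last constant fraction of nodes. Instead, flood forward from a source for `r ≈ 2 log n / log d`
rounds and backward in time from a target for `r` rounds: both sets contain at least `n / 40` nodes,
so they meet or are joined by an edge of the snapshot in the middle, and the target is informed
after `2 r + 1` rounds. Conversely, the number of informed nodes grows by a factor of at most
`1 + 8 d ≤ d²` per round, so it stays below `n` before time `log n / (2 log d)`.
-/

/-- `G` is `m`-joined: any two disjoint sets of at least `m` nodes have an edge between them. This
lets the forward and the backward flooding meet once both are large. -/
def IsJoined {n : ℕ} (G : SimpleGraph (Fin n)) (m : ℝ) : Prop :=
  ∀ A B : Finset (Fin n), Disjoint A B → m ≤ #A → m ≤ #B → ∃ a ∈ A, ∃ b ∈ B, G.Adj a b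

section Flooding

variable {n : ℕ} {G : SimpleGraph (Fin n)} {Gs : ℕ → SimpleGraph (Fin n)} {s u v : Fin n}
  {A B : Finset (Fin n)} {t : ℕ} {h k m D : ℝ}

lemma mem_nbhd_s15 : v ∈ nbhd G A ↔ v ∉ A ∧ ∃ u ∈ A, G.Adj u v := by
  simp [nbhd]

lemma card_nbhd_le_card_mul (hG : ∀ v, (#(nbhd G {v}) : ℝ) ≤ D) (A : Finset (Fin n)) :
    (#(nbhd G A) : ℝ) ≤ #A * D := by
  have hsub : nbhd G A ⊆ A.biUnion fun u => nbhd G {u} := fun v hv => by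
    obtain ⟨-, u, hu, huv⟩ := mem_nbhd_s15.1 hv
    exact mem_biUnion.2 ⟨u, hu, mem_nbhd_s15.2 ⟨by simpa using huv.ne', u, by simp, huv⟩⟩
  calc (#(nbhd G A) : ℝ) ≤ ∑ u ∈ A, (#(nbhd G {u}) : ℝ) := by
        exact_mod_cast (card_le_card hsub).trans card_biUnion_le
    _ ≤ #A * D := by simpa using sum_le_card_nsmul A _ D fun u _ => hG u

lemma IsExpander.exists_subset_min_le_card_nbhd (hG : IsExpander G h k) (hh : 1 ≤ h) (hk : 0 ≤ k)
    (A : Finset (Fin n)) : ∃ B ⊆ A, min (k * #A) (k * h / 2) ≤ #(nbhd G B) := by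
  rcases le_or_gt (#A : ℝ) h with hA | hA
  · obtain rfl | hne := A.eq_empty_or_nonempty
    · exact ⟨∅, subset_rfl, min_le_of_left_le (by simp)⟩
    · exact ⟨A, subset_rfl, min_le_of_left_le (hG A hne hA)⟩
  · obtain ⟨B, hBA, hB⟩ := exists_subset_card_eq (s := A) (Nat.floor_le_of_le hA.le)
    have hB_pos : 1 ≤ #B := hB ▸ Nat.one_le_floor_iff h |>.2 hh
    have hB_le : (#B : ℝ) ≤ h := hB ▸ Nat.floor_le (by linarith)
    have h_le : h ≤ 2 * #B := by
      have : h < #B + 1 := hB ▸ Nat.lt_floor_add_one h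
      have : (1 : ℝ) ≤ #B := by exact_mod_cast hB_pos
      linarith
    refine ⟨B, hBA, min_le_of_right_le ?_⟩
    calc k * h / 2 ≤ k * #B := by nlinarith
      _ ≤ #(nbhd G B) := hG B (card_pos.1 hB_pos) hB_le

lemma mem_informed_succ :
    v ∈ informed Gs s (t + 1) ↔ v ∈ informed Gs s t ∨ ∃ u ∈ informed Gs s t, (Gs t).Adj u v := by
  simp only [informed, mem_union, mem_nbhd_s15]
  tauto

lemma nbhd_subset_informed_succ (hB : B ⊆ informed Gs s t) :
    nbhd (Gs t) B ⊆ informed Gs s (t + 1) := fun v hv => by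
  obtain ⟨-, u, hu, huv⟩ := mem_nbhd_s15.1 hv
  exact mem_informed_succ.2 (.inr ⟨u, hB hu, huv⟩)

lemma min_le_card_informed (hh : 1 ≤ h) (hk : 1 ≤ k) (t : ℕ)
    (hGs : ∀ i < t, IsExpander (Gs i) h k) : min (k ^ t) (k * h / 2) ≤ #(informed Gs s t) := by
  induction t with
  | zero => simp [informed]
  | succ t ih =>
    have ih := ih fun i hi => hGs i (by omega)
    obtain ⟨B, hB, hcard⟩ :=
      (hGs t (by omega)).exists_subset_min_le_card_nbhd hh (by linarith) (informed Gs s t)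
    calc min (k ^ (t + 1)) (k * h / 2) ≤ min (k * min (k ^ t) (k * h / 2)) (k * h / 2) := by
          rw [mul_min_of_nonneg _ _ (by linarith), ← pow_succ']
          refine le_min (min_le_min_left _ (le_mul_of_one_le_left ?_ hk)) (min_le_right _ _)
          positivity
      _ ≤ min (k * #(informed Gs s t)) (k * h / 2) := by gcongr
      _ ≤ #(nbhd (Gs t) B) := hcard
      _ ≤ #(informed Gs s (t + 1)) := by
          exact_mod_cast card_le_card (nbhd_subset_informed_succ hB)

lemma mem_informed_of_mem_reversed {N j : ℕ} (hj : j ≤ N)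
    (hu_rev : u ∈ informed (fun i => Gs (N - (i + 1))) v j) (hu : u ∈ informed Gs s (N - j)) :
    v ∈ informed Gs s N := by
  induction j generalizing u with
  | zero => simp_all [informed]
  | succ j ih =>
    have hsucc : N - (j + 1) + 1 = N - j := by omega
    obtain hu_rev | ⟨w, hw_rev, hwu⟩ := mem_informed_succ.1 hu_rev
    · exact ih (by omega) hu_rev (hsucc ▸ mem_informed_succ.2 (.inl hu))
    · exact ih (by omega) hw_rev (hsucc ▸ mem_informed_succ.2 (.inr ⟨u, hu, hwu.symm⟩))

lemma informed_eq_univ {r : ℕ} (hh : 1 ≤ h) (hk : 1 ≤ k) (hmr : m ≤ k ^ r) (hm : m ≤ k * h / 2)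
    (hexp : ∀ i < 2 * r + 1, IsExpander (Gs i) h k) (hjoin : IsJoined (Gs r) m) (s : Fin n) :
    informed Gs s (2 * r + 1) = univ := by
  refine eq_univ_of_forall fun v => ?_
  set A := informed Gs s r
  set B := informed (fun i => Gs (2 * r + 1 - (i + 1))) v r
  have hA : m ≤ #A :=
    (le_min hmr hm).trans (min_le_card_informed hh hk r fun i hi => hexp i (by omega))
  have hB : m ≤ #B :=
    (le_min hmr hm).trans (min_le_card_informed hh hk r fun i hi => hexp _ (by omega))
  have meet : ∀ b ∈ B, b ∈ informed Gs s (r + 1) → v ∈ informed Gs s (2 * r + 1) := fun b hb hb' =>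
    mem_informed_of_mem_reversed (by omega) hb (by rwa [show 2 * r + 1 - r = r + 1 by omega])
  by_cases hAB : Disjoint A B
  · obtain ⟨a, ha, b, hb, hab⟩ := hjoin A B hAB hA hB
    exact meet b hb (mem_informed_succ.2 (.inr ⟨a, ha, hab⟩))
  · obtain ⟨b, hbA, hbB⟩ := not_disjoint_iff.1 hAB
    exact meet b hbB (mem_informed_succ.2 (.inl hbA))

lemma card_informed_le (hD : 0 ≤ D) (t : ℕ) (hGs : ∀ i < t, ∀ v, (#(nbhd (Gs i) {v}) : ℝ) ≤ D) :
    (#(informed Gs s t) : ℝ) ≤ (1 + D) ^ t := by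
  induction t with
  | zero => simp [informed]
  | succ t ih =>
    have ih := ih fun i hi => hGs i (by omega)
    calc (#(informed Gs s (t + 1)) : ℝ)
        ≤ #(informed Gs s t) + #(nbhd (Gs t) (informed Gs s t)) := by
          exact_mod_cast card_union_le _ _
      _ ≤ #(informed Gs s t) * (1 + D) := by
          linarith [card_nbhd_le_card_mul (hGs t (by omega)) (informed Gs s t)]
      _ ≤ (1 + D) ^ (t + 1) := by rw [pow_succ]; gcongr

end Flooding

lemma four_le_exp_two : 4 ≤ Real.exp 2 := by
  have hexp_one := Real.exp_one_gt_d9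
  have hexp_two : Real.exp 2 = Real.exp 1 * Real.exp 1 := by rw [← Real.exp_add]; norm_num
  nlinarith

lemma exp_two_le_eight : Real.exp 2 ≤ 8 := by
  have hexp_one := Real.exp_one_lt_d9
  have hexp_two : Real.exp 2 = Real.exp 1 * Real.exp 1 := by rw [← Real.exp_add]; norm_num
  nlinarith [Real.exp_pos 1]

lemma one_le_log {x : ℝ} (hx : 3 ≤ x) : 1 ≤ Real.log x := by
  rw [Real.le_log_iff_exp_le (by linarith)]
  linarith [Real.exp_one_lt_d9]

lemma log_div_log_le_self {x y : ℝ} (hx : 1 ≤ x) (hy : 1 ≤ Real.log y) :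
    Real.log x / Real.log y ≤ x := by
  calc Real.log x / Real.log y ≤ Real.log x := div_le_self (Real.log_nonneg hx) hy
    _ ≤ x := Real.log_le_self (by linarith)

lemma exp_neg_le_one_div_pow {n : ℕ} (hn : 0 < n) {k : ℕ} {x : ℝ} (hx : k * Real.log n ≤ x) :
    Real.exp (-x) ≤ 1 / (n : ℝ) ^ k := by
  calc Real.exp (-x) ≤ Real.exp (-(k * Real.log n)) := by gcongr
    _ = 1 / (n : ℝ) ^ k := by
        rw [Real.exp_neg, Real.exp_nat_mul, Real.exp_log (by exact_mod_cast hn), one_div]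

lemma mul_exp_neg_le_one_div_pow {n : ℕ} (hn : 0 < n) {k : ℕ} {x : ℝ}
    (hx : (k + 1) * Real.log n ≤ x) : n * Real.exp (-x) ≤ 1 / (n : ℝ) ^ k := by
  have : (0 : ℝ) < n := by exact_mod_cast hn
  calc n * Real.exp (-x) ≤ n * (1 / (n : ℝ) ^ (k + 1)) := by
        gcongr
        exact exp_neg_le_one_div_pow hn (by exact_mod_cast hx)
    _ = 1 / (n : ℝ) ^ k := by field_simp; ring

lemma sum_Icc_pow_card_mul_pow {α β : Type*} [DecidableEq α] [CommSemiring β] {X Z : Finset α}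
    (hXZ : X ⊆ Z) {p q : β} (hpq : p + q = 1) {N : ℕ} (hN : #Z ≤ N) :
    ∑ S ∈ Icc X Z, p ^ #S * q ^ (N - #S) = p ^ #X * q ^ (N - #Z) := by
  have hcard_sdiff := card_sdiff_add_card_eq_card hXZ
  have hterm : ∀ T ∈ (Z \ X).powerset, p ^ #(X ∪ T) * q ^ (N - #(X ∪ T)) =
      p ^ #X * q ^ (N - #Z) * (p ^ #T * q ^ (#(Z \ X) - #T)) := fun T hT => by
    rw [mem_powerset] at hT
    have hT_card := card_le_card hT
    have hsplit : N - (#X + #T) = (N - #Z) + (#(Z \ X) - #T) := by omega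
    rw [card_union_of_disjoint (disjoint_sdiff.mono_right hT), hsplit]
    ring
  have hinj : Set.InjOn (X ∪ ·) ↑(Z \ X).powerset := fun T hT T' hT' h => by
    simp only [coe_powerset, Set.mem_preimage, Set.mem_powerset_iff, coe_subset] at hT hT'
    have hdisj := fun {U : Finset α} (hU : U ⊆ Z \ X) => disjoint_sdiff.mono_right hU
    rw [← union_sdiff_cancel_left (hdisj hT), ← union_sdiff_cancel_left (hdisj hT')]
    exact congrArg (· \ X) h
  rw [Icc_eq_image_powerset hXZ, sum_image hinj, sum_congr rfl hterm, ← mul_sum,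
    sum_pow_mul_eq_add_pow, hpq, one_pow, mul_one]

lemma sum_pow_card_le_exp (α : Type*) [Fintype α] {x : ℝ} (hx : 0 ≤ x) :
    ∑ S : Finset α, x ^ #S ≤ Real.exp (Fintype.card α * x) := by
  calc ∑ S : Finset α, x ^ #S = (x + 1) ^ Fintype.card α := by
        simpa using Fintype.sum_pow_mul_eq_add_pow α x 1
    _ ≤ Real.exp x ^ Fintype.card α := by gcongr; exact Real.add_one_le_exp x
    _ = Real.exp (Fintype.card α * x) := (Real.exp_nat_mul _ _).symm

lemma sum_nonempty_pow_card_le {α : Type*} [Fintype α] {x : ℝ} (hx : 0 ≤ x)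
    (hx' : Fintype.card α * x ≤ 1) :
    ∑ S : Finset α with S.Nonempty, x ^ #S ≤ 2 * (Fintype.card α * x) := by
  classical
  have hsum : 1 + ∑ S : Finset α with S.Nonempty, x ^ #S = ∑ S : Finset α, x ^ #S := by
    rw [← add_sum_erase univ _ (mem_univ ∅)]
    simp [nonempty_iff_ne_empty, filter_ne']
  have habs : |Fintype.card α * x| = Fintype.card α * x := abs_of_nonneg (by positivity)
  have hexp := Real.abs_exp_sub_one_le (x := Fintype.card α * x) (by rwa [habs])
  rw [habs] at hexp
  linarith [le_of_abs_le hexp, sum_pow_card_le_exp α hx]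

lemma one_sub_pow_le_exp_neg {p : ℝ} (hp : p ≤ 1) (N : ℕ) : (1 - p) ^ N ≤ Real.exp (-(p * N)) := by
  calc (1 - p) ^ N ≤ Real.exp (-p) ^ N := by
        gcongr
        exact Real.one_sub_le_exp_neg p
    _ = Real.exp (-(p * N)) := by rw [← Real.exp_nat_mul]; ring_nf

section Measure

variable {Ω : Type*} [MeasurableSpace Ω] {μ : Measure Ω}

lemma measureReal_le_sum_of_forall_exists [IsFiniteMeasure μ] {ι : Type*} {F : Finset ι}
    {s : ι → Set Ω} {t : Set Ω} {b : ι → ℝ} (ht : ∀ ω ∈ t, ∃ i ∈ F, ω ∈ s i)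
    (hs : ∀ i ∈ F, μ.real (s i) ≤ b i) : μ.real t ≤ ∑ i ∈ F, b i :=
  calc μ.real t ≤ μ.real (⋃ i ∈ F, s i) :=
        measureReal_mono (fun ω hω => by simpa using ht ω hω) (measure_ne_top _ _)
    _ ≤ ∑ i ∈ F, μ.real (s i) := measureReal_biUnion_finset_le F s
    _ ≤ ∑ i ∈ F, b i := sum_le_sum hs

lemma ofReal_one_sub_le_measure_of_compl_subset [IsProbabilityMeasure μ] {s t : Set Ω} {ε : ℝ}
    (hst : sᶜ ⊆ t) (hs : μ.real s ≤ ε) : ENNReal.ofReal (1 - ε) ≤ μ t := by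
  have hcover : 1 ≤ μ.real s + μ.real t := calc
    1 = μ.real (s ∪ t) := by rw [Set.compl_subset_iff_union.1 hst, probReal_univ]
    _ ≤ μ.real s + μ.real t := measureReal_union_le s t
  rw [← ofReal_measureReal (μ := μ) (s := t)]
  exact ENNReal.ofReal_le_ofReal (by linarith)

end Measure

lemma injOn_sym2_mk_product_compl {α : Type*} [Fintype α] [DecidableEq α] (A : Finset α) :
    Set.InjOn (fun q : α × α => s(q.1, q.2)) (A ×ˢ Aᶜ : Finset (α × α)) := by
  rintro ⟨a, b⟩ hab ⟨c, d⟩ hcd h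
  simp only [coe_product, Set.mem_prod, mem_coe, mem_compl] at hab hcd
  obtain ⟨rfl, rfl⟩ | ⟨rfl, rfl⟩ := Sym2.eq_iff.1 h
  exacts [rfl, absurd hab.1 hcd.2]

lemma card_edgeSet_fromEdgeSet {α : Type*} {S : Finset (Sym2 α)}
    (hS : Disjoint (S : Set (Sym2 α)) Sym2.diagSet) :
    Nat.card (SimpleGraph.fromEdgeSet (S : Set (Sym2 α))).edgeSet = #S := by
  rw [SimpleGraph.edgeSet_fromEdgeSet, hS.sdiff_eq_left, Nat.card_coe_set_eq, Set.ncard_coe_finset]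

namespace IsErdosRenyi

variable {n : ℕ} {Ω : Type} [MeasurableSpace Ω] {μ : Measure Ω} {G : Ω → SimpleGraph (Fin n)}
  {p : ℝ}

lemma le_one [IsProbabilityMeasure μ] (hG : IsErdosRenyi μ G p) (hn : 2 ≤ n) : p ≤ 1 := by
  have hcard : Nat.card (⊤ : SimpleGraph (Fin n)).edgeSet = n.choose 2 := by
    rw [Nat.card_eq_fintype_card, ← SimpleGraph.edgeFinset_card,
      SimpleGraph.card_edgeFinset_top_eq_card_choose_two, Fintype.card_fin]
  have htop : μ {ω | G ω = ⊤} ≤ 1 := prob_le_one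
  rw [hG ⊤, hcard, Nat.sub_self, pow_zero, mul_one, ENNReal.ofReal_le_one] at htop
  by_contra! hp
  exact htop.not_gt (one_lt_pow₀ hp (Nat.choose_pos hn).ne')

variable [IsFiniteMeasure μ]

lemma measureReal_cylinder_le (hG : IsErdosRenyi μ G p) (h0 : 0 ≤ p) (h1 : p ≤ 1)
    (X : Finset (Sym2 (Fin n))) {Y : Finset (Sym2 (Fin n))}
    (hY : Y ⊆ (⊤ : SimpleGraph (Fin n)).edgeFinset) :
    μ.real {ω | (∀ e ∈ X, e ∈ (G ω).edgeSet) ∧ ∀ e ∈ Y, e ∉ (G ω).edgeSet} ≤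
      p ^ #X * (1 - p) ^ #Y := by
  classical
  have : 0 ≤ 1 - p := by linarith
  set E := (⊤ : SimpleGraph (Fin n)).edgeFinset with hE
  have hE_card : #E = n.choose 2 := by
    rw [hE, SimpleGraph.card_edgeFinset_top_eq_card_choose_two, Fintype.card_fin]
  have hcover : ∀ ω ∈ {ω | (∀ e ∈ X, e ∈ (G ω).edgeSet) ∧ ∀ e ∈ Y, e ∉ (G ω).edgeSet},
      ∃ S ∈ Icc X (E \ Y), ω ∈ {ω | G ω = SimpleGraph.fromEdgeSet (S : Set (Sym2 (Fin n)))} := by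
    rintro ω ⟨hX, hY⟩
    refine ⟨(G ω).edgeFinset, mem_Icc.2 ⟨fun e he => by simpa using hX e he, fun e he => ?_⟩,
      by simp⟩
    exact mem_sdiff.2 ⟨SimpleGraph.edgeFinset_mono le_top he,
      fun heY => hY e heY (SimpleGraph.mem_edgeFinset.1 he)⟩
  have hpoint : ∀ S ∈ Icc X (E \ Y),
      μ.real {ω | G ω = SimpleGraph.fromEdgeSet (S : Set (Sym2 (Fin n)))} ≤
        p ^ #S * (1 - p) ^ (n.choose 2 - #S) := fun S hS => by
    have hS_diag : Disjoint (S : Set (Sym2 (Fin n))) Sym2.diagSet := by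
      refine Set.disjoint_left.2 fun e heS => ?_
      simpa [hE] using (mem_sdiff.1 ((mem_Icc.1 hS).2 heS)).1
    rw [Measure.real, hG, card_edgeSet_fromEdgeSet hS_diag, ENNReal.toReal_ofReal (by positivity)]
  refine (measureReal_le_sum_of_forall_exists hcover hpoint).trans ?_
  by_cases hXZ : X ⊆ E \ Y
  · have hsdiff : n.choose 2 - #(E \ Y) = #Y := by
      have := card_sdiff_add_card_eq_card hY
      omega
    rw [sum_Icc_pow_card_mul_pow hXZ (by ring) (hE_card ▸ card_le_card sdiff_subset), hsdiff]
  · rw [Icc_eq_empty hXZ, sum_empty]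
    positivity

lemma measureReal_cut_le (hG : IsErdosRenyi μ G p) (h0 : 0 ≤ p) (h1 : p ≤ 1) {A : Finset (Fin n)}
    {X Y : Finset (Fin n × Fin n)} (hX : X ⊆ A ×ˢ Aᶜ) (hY : Y ⊆ A ×ˢ Aᶜ) :
    μ.real {ω | (∀ q ∈ X, (G ω).Adj q.1 q.2) ∧ ∀ q ∈ Y, ¬ (G ω).Adj q.1 q.2} ≤
      p ^ #X * (1 - p) ^ #Y := by
  have hinj := injOn_sym2_mk_product_compl A
  have hcyl := hG.measureReal_cylinder_le h0 h1 (X.image fun q => s(q.1, q.2))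
    (Y := Y.image fun q => s(q.1, q.2)) <| image_subset_iff.2 fun q hq => by
      have hqA := mem_product.1 (hY hq)
      simpa using fun h : q.1 = q.2 => mem_compl.1 hqA.2 (h ▸ hqA.1)
  rw [card_image_of_injOn (hinj.mono (coe_subset.2 hX)),
    card_image_of_injOn (hinj.mono (coe_subset.2 hY))] at hcyl
  simpa only [forall_mem_image, SimpleGraph.mem_edgeSet] using hcyl

lemma measureReal_forall_adj_and_forall_not_adj_le (hG : IsErdosRenyi μ G p) (h0 : 0 ≤ p)
    (h1 : p ≤ 1) {A S B : Finset (Fin n)} (hS : S ⊆ Aᶜ) (hB : B ⊆ Aᶜ) {g : S → Fin n}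
    (hg : ∀ v, g v ∈ A) :
    μ.real {ω | (∀ v, (G ω).Adj (g v) v) ∧ ∀ a ∈ A, ∀ b ∈ B, ¬ (G ω).Adj a b} ≤
      p ^ #S * (1 - p) ^ (#A * #B) := by
  let X : Finset (Fin n × Fin n) := univ.image fun v => (g v, v)
  have hX_card : #X = #S := by
    rw [card_image_of_injective _ fun v w h => Subtype.ext (Prod.ext_iff.1 h).2, card_univ,
      Fintype.card_coe]
  have hX_sub : X ⊆ A ×ˢ Aᶜ :=
    image_subset_iff.2 fun v _ => mem_product.2 ⟨hg v, hS v.2⟩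
  have hcut := hG.measureReal_cut_le h0 h1 hX_sub (product_subset_product_right hB)
  rw [hX_card, card_product] at hcut
  refine (measureReal_mono ?_).trans hcut
  rintro ω ⟨hadj, hnadj⟩
  exact ⟨forall_mem_image.2 fun v _ => hadj v, fun q hq =>
    hnadj q.1 (mem_product.1 hq).1 q.2 (mem_product.1 hq).2⟩

lemma measureReal_forall_not_adj_le (hG : IsErdosRenyi μ G p) (h0 : 0 ≤ p) (h1 : p ≤ 1)
    {A B : Finset (Fin n)} (hAB : Disjoint A B) :
    μ.real {ω | ∀ a ∈ A, ∀ b ∈ B, ¬ (G ω).Adj a b} ≤ (1 - p) ^ (#A * #B) := by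
  simpa using hG.measureReal_forall_adj_and_forall_not_adj_le h0 h1 (empty_subset Aᶜ)
    (subset_compl_iff_disjoint_left.2 hAB) (g := Subtype.val) (by simp)

lemma measureReal_nbhd_eq_le (hG : IsErdosRenyi μ G p) (h0 : 0 ≤ p) (h1 : p ≤ 1)
    {A S : Finset (Fin n)} (hS : S ⊆ Aᶜ) :
    μ.real {ω | nbhd (G ω) A = S} ≤ (#A * p) ^ #S * (1 - p) ^ (#A * (n - #A - #S)) := by
  set B := (A ∪ S)ᶜ with hB
  have hB_card : #B = n - #A - #S := by
    rw [hB, card_compl, Fintype.card_fin,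
      card_union_of_disjoint (subset_compl_iff_disjoint_left.1 hS), Nat.sub_sub]
  have hB_sub : B ⊆ Aᶜ := compl_subset_compl.2 subset_union_left
  have hcover : ∀ ω ∈ {ω | nbhd (G ω) A = S}, ∃ g ∈ Fintype.piFinset fun _ : S => A,
      ω ∈ {ω | (∀ v, (G ω).Adj (g v) v) ∧ ∀ a ∈ A, ∀ b ∈ B, ¬ (G ω).Adj a b} := by
    rintro ω rfl
    choose g hgA hg using fun v : nbhd (G ω) A => (mem_nbhd_s15.1 v.2).2
    refine ⟨g, Fintype.mem_piFinset.2 hgA, hg, fun a ha b hb hadj => ?_⟩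
    simp only [hB, mem_compl, mem_union, not_or] at hb
    exact hb.2 (mem_nbhd_s15.2 ⟨hb.1, a, ha, hadj⟩)
  refine (measureReal_le_sum_of_forall_exists hcover fun g hg =>
    hG.measureReal_forall_adj_and_forall_not_adj_le h0 h1 hS hB_sub
      (Fintype.mem_piFinset.1 hg)).trans_eq ?_
  simp [hB_card, mul_pow, mul_assoc]

-- Chernoff's method in combinatorial form: `y` plays the role of `exp θ` (upper tails) or
-- `exp (-θ)` (lower tails).
lemma measureReal_nbhd_le_of_tilt (hG : IsErdosRenyi μ G p) (h0 : 0 ≤ p) (h1 : p ≤ 1)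
    (A : Finset (Fin n)) {Q : Finset (Fin n) → Prop} {C y : ℝ} (hC : 0 ≤ C) (hy : 0 ≤ y)
    (hQ : ∀ S, Q S → (1 - p) ^ (#A * (n - #A - #S)) ≤ C * y ^ #S) :
    μ.real {ω | Q (nbhd (G ω) A)} ≤ C * Real.exp (n * (#A * p * y)) := by
  classical
  have hcover : ∀ ω ∈ {ω | Q (nbhd (G ω) A)}, ∃ S ∈ ({S | S ⊆ Aᶜ ∧ Q S} : Finset (Finset (Fin n))),
      ω ∈ {ω | nbhd (G ω) A = S} := fun ω hω =>
    ⟨nbhd (G ω) A, by simpa using ⟨fun v hv => mem_compl.2 (mem_nbhd_s15.1 hv).1, hω⟩, rfl⟩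
  have hpoint : ∀ S ∈ ({S | S ⊆ Aᶜ ∧ Q S} : Finset (Finset (Fin n))),
      μ.real {ω | nbhd (G ω) A = S} ≤ C * (#A * p * y) ^ #S := fun S hS => by
    obtain ⟨hSA, hS⟩ := (mem_filter.1 hS).2
    calc μ.real {ω | nbhd (G ω) A = S}
        ≤ (#A * p) ^ #S * (1 - p) ^ (#A * (n - #A - #S)) := hG.measureReal_nbhd_eq_le h0 h1 hSA
      _ ≤ (#A * p) ^ #S * (C * y ^ #S) := by gcongr; exact hQ S hS
      _ = C * (#A * p * y) ^ #S := by ring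
  calc μ.real {ω | Q (nbhd (G ω) A)}
      ≤ ∑ S : Finset (Fin n) with S ⊆ Aᶜ ∧ Q S, C * (#A * p * y) ^ #S :=
        measureReal_le_sum_of_forall_exists hcover hpoint
    _ ≤ ∑ S : Finset (Fin n), C * (#A * p * y) ^ #S :=
        sum_le_sum_of_subset_of_nonneg (filter_subset _ _) fun _ _ _ => by positivity
    _ ≤ C * Real.exp (n * (#A * p * y)) := by
        rw [← mul_sum]
        gcongr
        simpa using sum_pow_card_le_exp (Fin n) (x := #A * p * y) (by positivity)

lemma measureReal_card_nbhd_lt_le (hG : IsErdosRenyi μ G p) (h0 : 0 ≤ p) (h1 : p ≤ 1)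
    {A : Finset (Fin n)} {θ k : ℝ} (hθ : 0 ≤ θ) (hk : #A + k ≤ n / 2) :
    μ.real {ω | #(nbhd (G ω) A) < k} ≤
      Real.exp (θ * k - n * p * #A / 2 + n * p * #A * Real.exp (-θ)) := by
  have htilt : ∀ S : Finset (Fin n), #S < k → (1 - p) ^ (#A * (n - #A - #S)) ≤
      Real.exp (θ * k - n * p * #A / 2) * Real.exp (-θ) ^ #S := fun S hS => by
    have hsub : (n : ℝ) / 2 ≤ (n - #A - #S : ℕ) := by
      have hle : #A + #S ≤ n := by
        have : (#A + #S : ℝ) ≤ n := by linarith [(n.cast_nonneg : (0 : ℝ) ≤ n)]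
        exact_mod_cast this
      rw [Nat.sub_sub, Nat.cast_sub hle, Nat.cast_add]
      linarith
    calc (1 - p) ^ (#A * (n - #A - #S))
        ≤ Real.exp (-(p * (#A * (n - #A - #S : ℕ)))) := by
          simpa using one_sub_pow_le_exp_neg h1 (#A * (n - #A - #S))
      _ ≤ Real.exp (-(p * (#A * (n / 2))) + θ * (k - #S)) := by
          gcongr
          have : 0 ≤ θ * (k - #S) := mul_nonneg hθ (by linarith)
          have : p * (#A * (n / 2)) ≤ p * (#A * (n - #A - #S : ℕ)) := by gcongr
          linarith
      _ = Real.exp (θ * k - n * p * #A / 2) * Real.exp (-θ) ^ #S := by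
          rw [← Real.exp_nat_mul, ← Real.exp_add]
          ring_nf
  refine (hG.measureReal_nbhd_le_of_tilt h0 h1 A (by positivity) (by positivity) htilt).trans_eq ?_
  rw [← Real.exp_add]
  ring_nf

lemma measureReal_lt_card_nbhd_le (hG : IsErdosRenyi μ G p) (h0 : 0 ≤ p) (h1 : p ≤ 1)
    (A : Finset (Fin n)) {θ : ℝ} (hθ : 0 ≤ θ) (k : ℝ) :
    μ.real {ω | k < #(nbhd (G ω) A)} ≤ Real.exp (n * p * #A * Real.exp θ - θ * k) := by
  have htilt : ∀ S : Finset (Fin n), k < #S → (1 - p) ^ (#A * (n - #A - #S)) ≤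
      Real.exp (-(θ * k)) * Real.exp θ ^ #S := fun S hS => by
    calc (1 - p) ^ (#A * (n - #A - #S)) ≤ 1 := pow_le_one₀ (by linarith) (by linarith)
      _ ≤ Real.exp (θ * (#S - k)) := Real.one_le_exp (mul_nonneg hθ (by linarith))
      _ = Real.exp (-(θ * k)) * Real.exp θ ^ #S := by
          rw [← Real.exp_nat_mul, ← Real.exp_add]
          ring_nf
  refine (hG.measureReal_nbhd_le_of_tilt h0 h1 A (by positivity) (by positivity) htilt).trans_eq ?_
  rw [← Real.exp_add]
  ring_nf

lemma measureReal_card_nbhd_lt_mul_card_le (hG : IsErdosRenyi μ G p) (h0 : 0 ≤ p) (h1 : p ≤ 1)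
    (hd : 4 ≤ n * p) {A : Finset (Fin n)} (hA : #A ≤ n / (n * p)) :
    μ.real {ω | #(nbhd (G ω) A) < n * p / 20 * #A} ≤ Real.exp (-(n * p / 10)) ^ #A := by
  set d := (n : ℝ) * p
  have hA_mul : #A * d ≤ n := (le_div_iff₀ (by linarith)).1 hA
  have hA_card : #A + d / 20 * #A ≤ n / 2 := by nlinarith [(#A).cast_nonneg (α := ℝ)]
  have hexp : Real.exp (-2) ≤ 1 / 4 := by
    rw [Real.exp_neg, one_div]
    exact inv_anti₀ (by norm_num) four_le_exp_two
  calc μ.real {ω | #(nbhd (G ω) A) < d / 20 * #A}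
      ≤ Real.exp (2 * (d / 20 * #A) - d * #A / 2 + d * #A * Real.exp (-2)) :=
        hG.measureReal_card_nbhd_lt_le h0 h1 (by norm_num) hA_card
    _ ≤ Real.exp (#A * -(d / 10)) := by
        have : d * #A * Real.exp (-2) ≤ d * #A * (1 / 4) := by gcongr
        have : 0 ≤ d * #A := by positivity
        gcongr
        linarith
    _ = Real.exp (-(d / 10)) ^ #A := Real.exp_nat_mul _ _

lemma measureReal_not_isExpander_le (hG : IsErdosRenyi μ G p) (h0 : 0 ≤ p) (h1 : p ≤ 1)
    (hd : 4 ≤ n * p) (hsmall : n * Real.exp (-(n * p / 10)) ≤ 1) :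
    μ.real {ω | ¬ IsExpander (G ω) (n / (n * p)) (n * p / 20)} ≤
      2 * (n * Real.exp (-(n * p / 10))) := by
  classical
  set d := (n : ℝ) * p
  have hcover : ∀ ω ∈ {ω | ¬ IsExpander (G ω) (n / d) (d / 20)},
      ∃ A ∈ ({A | A.Nonempty ∧ #A ≤ n / d} : Finset (Finset (Fin n))),
        ω ∈ {ω | #(nbhd (G ω) A) < d / 20 * #A} := fun ω hω => by
    simpa [IsExpander, and_assoc] using hω
  have hset : ∀ A ∈ ({A | A.Nonempty ∧ #A ≤ n / d} : Finset (Finset (Fin n))),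
      μ.real {ω | #(nbhd (G ω) A) < d / 20 * #A} ≤ Real.exp (-(d / 10)) ^ #A := fun A hA =>
    hG.measureReal_card_nbhd_lt_mul_card_le h0 h1 hd (mem_filter.1 hA).2.2
  calc μ.real {ω | ¬ IsExpander (G ω) (n / d) (d / 20)}
      ≤ ∑ A : Finset (Fin n) with A.Nonempty ∧ #A ≤ n / d, Real.exp (-(d / 10)) ^ #A :=
        measureReal_le_sum_of_forall_exists hcover hset
    _ ≤ ∑ A : Finset (Fin n) with A.Nonempty, Real.exp (-(d / 10)) ^ #A :=
        sum_le_sum_of_subset_of_nonneg (monotone_filter_right _ fun _ _ hA => hA.1)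
          fun _ _ _ => by positivity
    _ ≤ 2 * (n * Real.exp (-(d / 10))) := by
        simpa using
          sum_nonempty_pow_card_le (α := Fin n) (Real.exp_nonneg _) (by simpa using hsmall)

lemma measureReal_not_isJoined_le (hG : IsErdosRenyi μ G p) (h0 : 0 ≤ p) (h1 : p ≤ 1) {m : ℝ}
    (hm : 0 ≤ m) : μ.real {ω | ¬ IsJoined (G ω) m} ≤ Real.exp (2 * n - p * m ^ 2) := by
  classical
  set F : Finset (Finset (Fin n) × Finset (Fin n)) :=
    {q | Disjoint q.1 q.2 ∧ m ≤ #q.1 ∧ m ≤ #q.2}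
  have hcover : ∀ ω ∈ {ω | ¬ IsJoined (G ω) m},
      ∃ q ∈ F, ω ∈ {ω | ∀ a ∈ q.1, ∀ b ∈ q.2, ¬ (G ω).Adj a b} := fun ω hω => by
    simpa [IsJoined, F, and_assoc] using hω
  have hpair : ∀ q ∈ F, μ.real {ω | ∀ a ∈ q.1, ∀ b ∈ q.2, ¬ (G ω).Adj a b} ≤
      Real.exp (-(p * m ^ 2)) := fun q hq => by
    obtain ⟨hdisj, hm₁, hm₂⟩ := (mem_filter.1 hq).2
    calc μ.real {ω | ∀ a ∈ q.1, ∀ b ∈ q.2, ¬ (G ω).Adj a b}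
        ≤ (1 - p) ^ (#q.1 * #q.2) := hG.measureReal_forall_not_adj_le h0 h1 hdisj
      _ ≤ Real.exp (-(p * (#q.1 * #q.2))) := by
          simpa using one_sub_pow_le_exp_neg h1 (#q.1 * #q.2)
      _ ≤ Real.exp (-(p * m ^ 2)) := by rw [sq]; gcongr
  have hF_card : (#F : ℝ) ≤ Real.exp (2 * n) := calc
    (#F : ℝ) ≤ 2 ^ n * 2 ^ n := by exact_mod_cast (card_le_univ F).trans (by simp)
    _ = 4 ^ n := by rw [← mul_pow]; norm_num
    _ ≤ Real.exp 2 ^ n := by gcongr; exact four_le_exp_two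
    _ = Real.exp (2 * n) := by rw [← Real.exp_nat_mul, mul_comm]
  calc μ.real {ω | ¬ IsJoined (G ω) m}
      ≤ ∑ q ∈ F, Real.exp (-(p * m ^ 2)) := measureReal_le_sum_of_forall_exists hcover hpair
    _ = #F * Real.exp (-(p * m ^ 2)) := by rw [sum_const, nsmul_eq_mul]
    _ ≤ Real.exp (2 * n) * Real.exp (-(p * m ^ 2)) := by gcongr
    _ = Real.exp (2 * n - p * m ^ 2) := by rw [← Real.exp_add, sub_eq_add_neg]

lemma measureReal_exists_lt_card_nbhd_le (hG : IsErdosRenyi μ G p) (h0 : 0 ≤ p) (h1 : p ≤ 1)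
    {θ : ℝ} (hθ : 0 ≤ θ) (D : ℝ) :
    μ.real {ω | ∃ v, D < #(nbhd (G ω) {v})} ≤ n * Real.exp (n * p * Real.exp θ - θ * D) := by
  have hunion := measureReal_le_sum_of_forall_exists (F := univ)
    (t := {ω | ∃ v, D < #(nbhd (G ω) {v})}) (by simp)
    fun v _ => hG.measureReal_lt_card_nbhd_le h0 h1 {v} hθ D
  simpa using hunion

lemma measureReal_exists_eight_mul_lt_card_nbhd_le (hG : IsErdosRenyi μ G p) (h0 : 0 ≤ p)
    (h1 : p ≤ 1) :
    μ.real {ω | ∃ v, 8 * (n * p) < #(nbhd (G ω) {v})} ≤ n * Real.exp (-(8 * (n * p))) := by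
  refine (hG.measureReal_exists_lt_card_nbhd_le h0 h1 zero_le_two _).trans ?_
  have hexp : n * p * Real.exp 2 ≤ n * p * 8 := by gcongr; exact exp_two_le_eight
  gcongr
  linarith

end IsErdosRenyi

/-- The properties of a single snapshot that control flooding, for a graph of average degree about
`d`: small sets expand, large sets are joined, and degrees are bounded. The constants are such that
`G_{n, d / n}` has all three with high probability once `d ≥ c log n`, and that
expansion reaches the threshold `n / 40 = (d / 20) * (n / d) / 2` of joinedness. -/
structure IsFloodRegular {n : ℕ} (G : SimpleGraph (Fin n)) (d : ℝ) : Prop where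
  isExpander : IsExpander G (n / d) (d / 20)
  isJoined : IsJoined G (n / 40)
  card_nbhd_le : ∀ v, (#(nbhd G {v}) : ℝ) ≤ 8 * d

/-- The number of rounds after which flooding with expansion factor `d / 20` has reached a constant
fraction of the nodes. -/
def floodRadius (n : ℕ) (d : ℝ) : ℕ := ⌈2 * (Real.log n / Real.log d)⌉₊

section FloodRegular

variable {n : ℕ} {Gs : ℕ → SimpleGraph (Fin n)} {d : ℝ} {t : ℕ}

lemma le_pow_floodRadius (hn : 0 < n) (hd : 400 ≤ d) : (n : ℝ) ≤ (d / 20) ^ floodRadius n d := by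
  have hlog_pos : 0 < Real.log d := Real.log_pos (by linarith)
  have hlog_le : Real.log d ≤ 2 * Real.log (d / 20) := by
    have hlog_sq : Real.log d ≤ Real.log ((d / 20) ^ 2) :=
      Real.log_le_log (by linarith) (by nlinarith)
    simpa [Real.log_pow] using hlog_sq
  have hlog_n : Real.log n ≤ floodRadius n d * Real.log (d / 20) := calc
    Real.log n = 2 * (Real.log n / Real.log d) * (Real.log d / 2) := by field_simp
    _ ≤ floodRadius n d * Real.log (d / 20) := by
        gcongr
        · exact Nat.le_ceil _
        · linarith
  rw [← Real.log_pow] at hlog_n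
  exact (Real.log_le_log_iff (by exact_mod_cast hn) (by positivity)).1 hlog_n

lemma two_mul_floodRadius_add_one_le (hd : 1 < d) (hdn : d ≤ n) :
    ((2 * floodRadius n d + 1 : ℕ) : ℝ) ≤ 7 * Real.log n / Real.log d := by
  have hlog_pos : 0 < Real.log d := Real.log_pos hd
  have hratio : 1 ≤ Real.log n / Real.log d := by
    rw [one_le_div hlog_pos]
    gcongr
  have hceil := Nat.ceil_lt_add_one (a := 2 * (Real.log n / Real.log d)) (by positivity)
  rw [mul_div_assoc, floodRadius]
  push_cast
  linarith

lemma lt_two_mul_floodRadius_add_one (hd : 1 < d)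
    (ht : (t : ℝ) < 1 / 2 * Real.log n / Real.log d) : t < 2 * floodRadius n d + 1 := by
  have hratio : 0 ≤ Real.log n / Real.log d :=
    div_nonneg (Real.log_natCast_nonneg n) (Real.log_pos hd).le
  have hceil : 2 * (Real.log n / Real.log d) ≤ floodRadius n d := Nat.le_ceil _
  rw [mul_div_assoc] at ht
  have hlt : (t : ℝ) < (2 * floodRadius n d + 1 : ℕ) := by push_cast; linarith
  exact_mod_cast hlt

lemma informed_two_mul_floodRadius_add_one (hd : 400 ≤ d) (hdn : d ≤ n)
    (hGs : ∀ i < 2 * floodRadius n d + 1, IsFloodRegular (Gs i) d) (s : Fin n) :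
    informed Gs s (2 * floodRadius n d + 1) = univ := by
  have : (0 : ℝ) ≤ n := n.cast_nonneg
  have hradius := le_pow_floodRadius s.pos hd
  refine informed_eq_univ ((one_le_div (by linarith)).2 hdn) (by linarith)
    (m := n / 40) (by linarith) (le_of_eq ?_) (fun i hi => (hGs i hi).isExpander)
    (hGs _ (by omega)).isJoined s
  field_simp
  ring

lemma informed_ne_univ_of_lt (hd : 10 ≤ d) (ht : (t : ℝ) < 1 / 2 * Real.log n / Real.log d)
    (hGs : ∀ i < t, IsFloodRegular (Gs i) d) (s : Fin n) : informed Gs s t ≠ univ := fun hs => by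
  have hn : (0 : ℝ) < n := by exact_mod_cast s.pos
  have hlog_pos : 0 < Real.log d := Real.log_pos (by linarith)
  have hcard := card_informed_le (s := s) (by positivity) t fun i hi => (hGs i hi).card_nbhd_le
  rw [hs, card_univ, Fintype.card_fin] at hcard
  have hlt : (d ^ 2) ^ t < (n : ℝ) := by
    rw [← Real.log_lt_log_iff (by positivity) hn, Real.log_pow, Real.log_pow]
    rw [lt_div_iff₀ hlog_pos] at ht
    push_cast
    linarith
  have hle : (1 + 8 * d) ^ t ≤ (d ^ 2) ^ t := by
    gcongr
    nlinarith
  linarith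

end FloodRegular

namespace IsErdosRenyi

variable {n : ℕ} {Ω : Type} [MeasurableSpace Ω] {μ : Measure Ω} {p : ℝ}

lemma measureReal_not_isFloodRegular_le [IsProbabilityMeasure μ] {G : Ω → SimpleGraph (Fin n)}
    (hG : IsErdosRenyi μ G p) (hn : 3 ≤ n) (hp : 20000 * Real.log n ≤ n * p) :
    μ.real {ω | ¬ IsFloodRegular (G ω) (n * p)} ≤ 4 / (n : ℝ) ^ 5 := by
  have hn_pos : 0 < n := by omega
  have hn_one : (1 : ℝ) ≤ n := by exact_mod_cast hn_pos
  have hlog : 1 ≤ Real.log n := one_le_log (by exact_mod_cast hn)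
  have h0 : 0 ≤ p := (pos_of_mul_pos_right (by linarith) n.cast_nonneg).le
  have h1 : p ≤ 1 := hG.le_one (by omega)
  have hexp : n * Real.exp (-(n * p / 10)) ≤ 1 / (n : ℝ) ^ 5 :=
    mul_exp_neg_le_one_div_pow hn_pos (by push_cast; linarith)
  have hpow : 1 / (n : ℝ) ^ 5 ≤ 1 := div_le_one_of_le₀ (one_le_pow₀ hn_one) (by positivity)
  have hexpander := hG.measureReal_not_isExpander_le h0 h1 (by linarith) (hexp.trans hpow)
  have hjoined : μ.real {ω | ¬ IsJoined (G ω) (n / 40)} ≤ 1 / (n : ℝ) ^ 5 := by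
    refine (hG.measureReal_not_isJoined_le h0 h1 (by positivity)).trans ?_
    rw [← neg_sub]
    refine exp_neg_le_one_div_pow hn_pos ?_
    calc ((5 : ℕ) : ℝ) * Real.log n ≤ n * p / 1600 - 2 := by push_cast; linarith
      _ ≤ n * (n * p / 1600 - 2) := le_mul_of_one_le_left (by linarith) hn_one
      _ = p * (n / 40) ^ 2 - 2 * n := by ring
  have hdegree := (hG.measureReal_exists_eight_mul_lt_card_nbhd_le h0 h1).trans
    (mul_exp_neg_le_one_div_pow hn_pos (k := 5) (by push_cast; linarith))
  have hunion : {ω | ¬ IsFloodRegular (G ω) (n * p)} ⊆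
      {ω | ¬ IsExpander (G ω) (n / (n * p)) (n * p / 20)} ∪
        ({ω | ¬ IsJoined (G ω) (n / 40)} ∪ {ω | ∃ v, 8 * (n * p) < #(nbhd (G ω) {v})}) := by
    intro ω hω
    contrapose! hω
    simp only [Set.mem_union, Set.mem_ofPred_eq, not_or, not_not, not_exists, not_lt] at hω ⊢
    exact ⟨hω.1, hω.2.1, hω.2.2⟩
  calc μ.real {ω | ¬ IsFloodRegular (G ω) (n * p)}
      ≤ 2 * (1 / (n : ℝ) ^ 5) + (1 / (n : ℝ) ^ 5 + 1 / (n : ℝ) ^ 5) :=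
        (measureReal_mono hunion).trans <| (measureReal_union_le _ _).trans <|
          add_le_add (by linarith) <| (measureReal_union_le _ _).trans (add_le_add hjoined hdegree)
    _ = 4 / (n : ℝ) ^ 5 := by ring

lemma measureReal_exists_not_isFloodRegular_le [IsProbabilityMeasure μ]
    {Gs : ℕ → Ω → SimpleGraph (Fin n)} (hG : ∀ t, IsErdosRenyi μ (Gs t) p) (hn : 3 ≤ n)
    (hp : 20000 * Real.log n ≤ n * p) {N : ℕ} (hN : N ≤ 7 * (n : ℝ)) :
    μ.real {ω | ∃ t < N, ¬ IsFloodRegular (Gs t ω) (n * p)} ≤ 2 / n := by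
  have hn' : (3 : ℝ) ≤ n := by exact_mod_cast hn
  calc μ.real {ω | ∃ t < N, ¬ IsFloodRegular (Gs t ω) (n * p)}
      ≤ ∑ t ∈ range N, 4 / (n : ℝ) ^ 5 :=
        measureReal_le_sum_of_forall_exists
          (s := fun t => {ω | ¬ IsFloodRegular (Gs t ω) (n * p)}) (fun ω hω => by simpa using hω)
          fun t _ => (hG t).measureReal_not_isFloodRegular_le hn hp
    _ = N * (4 / (n : ℝ) ^ 5) := by simp
    _ ≤ 7 * n * (4 / (n : ℝ) ^ 5) := by gcongr
    _ = 28 / (n : ℝ) ^ 3 / n := by field_simp; norm_num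
    _ ≤ 2 / n := by
        gcongr
        rw [div_le_iff₀ (by positivity)]
        have : (3 : ℝ) ^ 3 ≤ n ^ 3 := by gcongr
        linarith

end IsErdosRenyi

theorem edge_flooding_tight_general :
    ∃ c c1 c2 : ℝ, 0 < c ∧ 0 < c1 ∧ 0 < c2 ∧
      ∀ (n : ℕ) (phat : ℝ) (Ω : Type) [MeasurableSpace Ω] (μ : Measure Ω)
        [IsProbabilityMeasure μ] (Gs : ℕ → Ω → SimpleGraph (Fin n)),
        3 ≤ n → c * Real.log n / n ≤ phat →
        (∀ t : ℕ, IsErdosRenyi μ (Gs t) phat) →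
        ENNReal.ofReal (1 - 2 / (n : ℝ)) ≤
          μ {ω |
            (∃ T : ℕ, (T : ℝ) ≤ c2 * Real.log n / Real.log ((n : ℝ) * phat) ∧
              ∀ src : Fin n, informed (fun t => Gs t ω) src T = Finset.univ) ∧
            (∀ t : ℕ, (t : ℝ) < c1 * Real.log n / Real.log ((n : ℝ) * phat) →
              ∀ src : Fin n, informed (fun t' => Gs t' ω) src t ≠ Finset.univ)} := by
  refine ⟨20000, 1 / 2, 7, by norm_num, by norm_num, by norm_num, ?_⟩
  intro n p Ω _ μ _ Gs hn hp hG
  have hn' : (3 : ℝ) ≤ n := by exact_mod_cast hn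
  have hn_pos : (0 : ℝ) < n := by linarith
  have hp : 20000 * Real.log n ≤ n * p := (div_le_iff₀' hn_pos).1 hp
  have hd : 20000 ≤ n * p := by linarith [one_le_log hn']
  have hd_le : n * p ≤ n := mul_le_of_le_one_right hn_pos.le ((hG 0).le_one (by omega))
  have hN := two_mul_floodRadius_add_one_le (by linarith) hd_le
  refine ofReal_one_sub_le_measure_of_compl_subset (fun ω hω => ?_)
    (IsErdosRenyi.measureReal_exists_not_isFloodRegular_le hG hn hp (hN.trans ?_))
  · simp only [Set.mem_compl_iff, Set.mem_ofPred_eq, not_exists, not_and, not_not] at hω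
    refine ⟨⟨_, hN, informed_two_mul_floodRadius_add_one (by linarith) hd_le hω⟩, fun t ht => ?_⟩
    have ht_lt := lt_two_mul_floodRadius_add_one (by linarith) ht
    exact informed_ne_univ_of_lt (by linarith) ht fun i hi => hω i (hi.trans ht_lt)
  · rw [mul_div_assoc]
    gcongr
    exact log_div_log_le_self (by linarith) (one_le_log (by linarith))

/-- tightness of flooding time of stationary edge-MEG. -/
theorem edge_flooding_tight :
    ∃ c c1 c2 : ℝ, 0 < c ∧ 0 < c1 ∧ 0 < c2 ∧
      ∀ (n : ℕ) (phat : ℝ) (Ω : Type) [MeasurableSpace Ω] (μ : Measure Ω)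
        [IsProbabilityMeasure μ] (Gs : ℕ → Ω → SimpleGraph (Fin n)),
        3 ≤ n → c * Real.log n / n ≤ phat →
        phat ≤ (n : ℝ) ^ ((1 : ℝ) / Real.log (Real.log n)) / n →
        (∀ t : ℕ, IsErdosRenyi μ (Gs t) phat) →
        ENNReal.ofReal (1 - 2 / (n : ℝ)) ≤
          μ {ω |
            (∃ T : ℕ, (T : ℝ) ≤ c2 * Real.log n / Real.log ((n : ℝ) * phat) ∧
              ∀ src : Fin n, informed (fun t => Gs t ω) src T = Finset.univ) ∧
            (∀ t : ℕ, (t : ℝ) < c1 * Real.log n / Real.log ((n : ℝ) * phat) →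
              ∃ src : Fin n, informed (fun t' => Gs t' ω) src t ≠ Finset.univ)} := by
  obtain ⟨c, c1, c2, hc, hc1, hc2, h⟩ := edge_flooding_tight_general
  exact ⟨c, c1, c2, hc, hc1, hc2, fun n p Ω _ μ _ Gs hn hp _ hG => (h n p Ω μ Gs hn hp hG).trans <|
    measure_mono fun _ hω => ⟨hω.1, fun t ht => ⟨⟨0, by omega⟩, hω.2 t ht _⟩⟩⟩

end
end
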